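/- arXiv:1009.0056 — 4 statements merged into one kernel-verified Lean document; each statement's English description precedes it below -/
import Mathlib

section
/- Suppose every transaction conflicts with at most Δ other transactions, and every transaction has duration at most τ_max. Then there exists a valid schedule whose makespan is at most (Δ + 1)·τ_max. -/
/-- Two distinct transactions conflict if one writes a resource the other accesses. -/
def Conflict {ι : Type*} {s : ℕ} (W Rd : ι → Finset (Fin s)) (i j : ι) : Prop :=
  i ≠ j ∧ (((W i) ∩ (W j ∪ Rd j)).Nonempty ∨ ((W j) ∩ (W i ∪ Rd i)).Nonempty)

/-- A schedule is valid if conflicting transactions execute in disjoint time intervals. -/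
def ValidSchedule {ι : Type*} {s : ℕ} (W Rd : ι → Finset (Fin s)) (τ : ι → ℕ)
    (σ : ι → ℕ) : Prop :=
  ∀ i j : ι, Conflict W Rd i j →
    Disjoint (Finset.Ico (σ i) (σ i + τ i)) (Finset.Ico (σ j) (σ j + τ j))

/-- The makespan of a schedule. -/
def makespan {ι : Type*} [Fintype ι] (τ : ι → ℕ) (σ : ι → ℕ) : ℕ :=
  Finset.univ.sup fun i => σ i + τ i

theorem color_aux {ι : Type*} [Fintype ι] {s Δ : ℕ}
    (W Rd : ι → Finset (Fin s))
    (hdeg : ∀ i : ι, {j : ι | Conflict W Rd i j}.ncard ≤ Δ) (S : Finset ι) :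
    ∃ c : ι → ℕ, (∀ i, c i ≤ Δ) ∧ ∀ i ∈ S, ∀ j ∈ S, Conflict W Rd i j → c i ≠ c j := by
  classical
  induction S using Finset.induction_on with
  | empty => exact ⟨fun _ => 0, by simp, by simp⟩
  | insert a S ha ih =>
    obtain ⟨c, hc, hS⟩ := ih
    have hsymm : ∀ i j, Conflict W Rd i j → Conflict W Rd j i :=
      fun i j h => ⟨h.1.symm, h.2.symm⟩
    have hcard : ((Finset.univ.filter (fun j => Conflict W Rd a j)).image c).card
        < (Finset.range (Δ + 1)).card := by
      refine lt_of_le_of_lt Finset.card_image_le ?_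
      have h := hdeg a
      rw [Set.ncard_eq_toFinset_card'] at h
      simp only [Set.toFinset_ofPred] at h
      rw [Finset.card_range]
      exact Nat.lt_succ_of_le h
    obtain ⟨k, hk, hk'⟩ := Finset.exists_mem_notMem_of_card_lt_card hcard
    have hne : ∀ j, Conflict W Rd a j → k ≠ c j := by
      rintro j hj rfl
      exact hk' (Finset.mem_image_of_mem c (by simpa using hj))
    refine ⟨Function.update c a k, ?_, ?_⟩
    · intro i
      by_cases h : i = a
      · subst h
        have := Finset.mem_range.1 hk
        simp only [Function.update_self]
        omega
      · simpa [h] using hc i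
    · intro i hi j hj hij
      by_cases h : i = a
      · subst h
        have hj' : j ≠ i := hij.1.symm
        simpa [hj'] using hne j hij
      · by_cases h' : j = a
        · subst h'
          simpa [h] using (hne i (hsymm _ _ hij)).symm
        · have hi' := Finset.mem_of_mem_insert_of_ne hi h
          have hj' := Finset.mem_of_mem_insert_of_ne hj h'
          simpa [h, h'] using hS i hi' j hj' hij

/-- If every transaction conflicts with at most `Δ` others and all durations are at most
`τmax`, there is a valid schedule with makespan at most `(Δ + 1)·τmax`. -/
theorem stmt3 {ι : Type*} [Fintype ι] {s Δ τmax : ℕ}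
    (W Rd : ι → Finset (Fin s)) (τ : ι → ℕ) (hτ : ∀ i, 1 ≤ τ i)
    (hdeg : ∀ i : ι, {j : ι | Conflict W Rd i j}.ncard ≤ Δ)
    (hτmax : ∀ i, τ i ≤ τmax) :
    ∃ σ : ι → ℕ, ValidSchedule W Rd τ σ ∧ makespan τ σ ≤ (Δ + 1) * τmax := by
  obtain ⟨c, hc, hne⟩ := color_aux W Rd hdeg Finset.univ
  have key : ∀ i n, c i + 1 ≤ n → c i * τmax + τ i ≤ n * τmax := by
    intro i n h
    have h1 := Nat.mul_le_mul_right τmax h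
    have h2 := hτmax i
    rw [Nat.add_mul] at h1
    omega
  refine ⟨fun i => c i * τmax, ?_, ?_⟩
  · intro i j hij
    rw [Finset.disjoint_left]
    intro x hx hy
    simp only [Finset.mem_Ico] at hx hy
    rcases lt_or_gt_of_ne (hne i (Finset.mem_univ _) j (Finset.mem_univ _) hij) with h | h
    · have := key i _ h
      omega
    · have := key j _ h
      omega
  · exact Finset.sup_le fun i _ => key i _ (Nat.succ_le_succ (hc i))
end

section
/- Suppose all transactions are write-only with nonempty write sets, every transaction has |W i| ≤ λ_max, and every duration satisfies τ_min ≤ τ i ≤ 2·τ_min for some τ_min ≥ 1. Then there exists a valid schedule σ such that for every valid schedule σ′, the makespan of σ is at most (2·λ_max + 2) times the makespan of σ′. -/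
theorem greedy_aux {ι : Type*} [Fintype ι] [DecidableEq ι] (C : ι → ι → Prop)
    (hsym : ∀ i j, C i j → C j i) (hirr : ∀ i, ¬ C i i) (D : ℕ) (N : ι → Finset ι)
    (hN : ∀ i j, C i j → j ∈ N i) (hD : ∀ i, (N i).card ≤ D) (S : Finset ι) :
    ∃ c : ι → ℕ, (∀ i, c i ≤ D) ∧ ∀ i ∈ S, ∀ j ∈ S, C i j → c i ≠ c j := by
  induction S using Finset.induction_on with
  | empty => exact ⟨fun _ => 0, by simp, by simp⟩
  | insert a S ha ih =>
    obtain ⟨c, hc, hp⟩ := ih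
    have h1 : ((N a).image c).card < (Finset.range (D + 1)).card := by
      rw [Finset.card_range]
      exact Nat.lt_succ_of_le (Finset.card_image_le.trans (hD a))
    obtain ⟨x, hx, hx'⟩ := Finset.exists_mem_notMem_of_card_lt_card h1
    have key : ∀ j, C a j → c j ≠ x := fun j hj e =>
      hx' (Finset.mem_image.2 ⟨j, hN a j hj, e⟩)
    refine ⟨Function.update c a x, ?_, ?_⟩
    · intro i
      have := Finset.mem_range.1 hx
      by_cases h : i = a
      · subst h; simp; omega
      · simp [h, hc i]
    · intro i hi j hj hij
      by_cases h : i = a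
      · by_cases h' : j = a
        · subst h; subst h'; exact absurd hij (hirr _)
        · subst h; simp [h']; exact fun e => key j hij e.symm
      · by_cases h' : j = a
        · subst h'; simp [h]; exact key i (hsym _ _ hij)
        · simp [h, h']
          exact hp i (Finset.mem_of_mem_insert_of_ne hi h) j
            (Finset.mem_of_mem_insert_of_ne hj h') hij

/-- Per-subgroup competitive bound (Lemma 1): for write-only transactions with nonempty
write sets of size at most `λmax` and durations in `[τmin, 2·τmin]`, there is a valid
schedule whose makespan is within a factor `2·λmax + 2` of every valid schedule. -/
theorem stmt5 {ι : Type*} [Fintype ι] {s lmax τmin : ℕ} (hτmin : 1 ≤ τmin)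
    (W Rd : ι → Finset (Fin s)) (τ : ι → ℕ)
    (hRd : ∀ i, Rd i = ∅) (hW : ∀ i, (W i).Nonempty)
    (hlam : ∀ i, (W i).card ≤ lmax)
    (hτ : ∀ i, τmin ≤ τ i ∧ τ i ≤ 2 * τmin) :
    ∃ σ : ι → ℕ, ValidSchedule W Rd τ σ ∧
      ∀ σ' : ι → ℕ, ValidSchedule W Rd τ σ' →
        makespan τ σ ≤ (2 * lmax + 2) * makespan τ σ' := by
  classical
  let T : Fin s → Finset ι := fun r => Finset.univ.filter fun i => r ∈ W i
  let γ : ℕ := Finset.univ.sup fun r => (T r).card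
  have hγ : ∀ r, (T r).card ≤ γ := fun r =>
    Finset.le_sup (f := fun r => (T r).card) (Finset.mem_univ r)
  have hC : ∀ i j, Conflict W Rd i j ↔ i ≠ j ∧ ((W i) ∩ (W j)).Nonempty := by
    intro i j
    simp [Conflict, hRd, Finset.inter_comm (W j) (W i)]
  obtain ⟨c, hc, hp⟩ := greedy_aux (Conflict W Rd)
    (by
      intro i j h
      rw [hC] at h ⊢
      exact ⟨h.1.symm, by rw [Finset.inter_comm]; exact h.2⟩)
    (fun i h => h.1 rfl) (lmax * γ) (fun i => (W i).biUnion T)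
    (by
      intro i j h
      rw [hC] at h
      obtain ⟨r, hr⟩ := h.2
      rw [Finset.mem_inter] at hr
      exact Finset.mem_biUnion.2 ⟨r, hr.1, by simp [T, hr.2]⟩)
    (fun i => (Finset.card_biUnion_le_card_mul _ _ γ (fun r _ => hγ r)).trans
      (Nat.mul_le_mul_right _ (hlam i))) Finset.univ
  refine ⟨fun i => c i * (2 * τmin), ?_, ?_⟩
  · intro i j hij
    have hne := hp i (Finset.mem_univ _) j (Finset.mem_univ _) hij
    rw [Finset.disjoint_left]
    intro t ht ht'
    simp only [Finset.mem_Ico] at ht ht'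
    have h1 := (hτ i).2
    have h2 := (hτ j).2
    rcases lt_or_gt_of_ne hne with h | h
    · have := Nat.mul_le_mul_right (2 * τmin) (Nat.succ_le_of_lt h)
      rw [Nat.succ_mul] at this
      omega
    · have := Nat.mul_le_mul_right (2 * τmin) (Nat.succ_le_of_lt h)
      rw [Nat.succ_mul] at this
      omega
  · intro σ' hσ'
    have hr : ∀ r, (T r).card * τmin ≤ makespan τ σ' := by
      intro r
      have hd : ((T r : Finset ι) : Set ι).PairwiseDisjoint
          (fun i => Finset.Ico (σ' i) (σ' i + τ i)) := by
        intro i hi j hj hij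
        refine hσ' i j ((hC i j).2 ⟨hij, r, ?_⟩)
        simp [T] at hi hj
        simp [hi, hj]
      have hsub : (T r).biUnion (fun i => Finset.Ico (σ' i) (σ' i + τ i)) ⊆
          Finset.range (makespan τ σ') := by
        intro t ht
        obtain ⟨i, -, hi⟩ := Finset.mem_biUnion.1 ht
        have : σ' i + τ i ≤ makespan τ σ' :=
          Finset.le_sup (f := fun i => σ' i + τ i) (Finset.mem_univ i)
        simp only [Finset.mem_Ico] at hi
        exact Finset.mem_range.2 (by omega)
      have h2 := Finset.card_le_card hsub
      rw [Finset.card_biUnion hd, Finset.card_range] at h2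
      refine le_trans ?_ h2
      rw [← smul_eq_mul]
      exact Finset.card_nsmul_le_sum _ _ _ (fun i _ => by simpa using (hτ i).1)
    refine Finset.sup_le fun i _ => ?_
    obtain ⟨r0, hr0⟩ := hW i
    have hpos : 1 ≤ γ := le_trans (Finset.card_pos.2 ⟨i, by simp [T, hr0]⟩) (hγ r0)
    have hopt : γ * τmin ≤ makespan τ σ' := by
      obtain ⟨r, -, hr'⟩ := Finset.exists_mem_eq_sup (Finset.univ : Finset (Fin s))
        ⟨r0, Finset.mem_univ _⟩ (fun r => (T r).card)
      have : γ = (T r).card := hr'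
      rw [this]
      exact hr r
    have h1 := (hτ i).2
    calc c i * (2 * τmin) + τ i ≤ (lmax * γ) * (2 * τmin) + 2 * τmin :=
          Nat.add_le_add (Nat.mul_le_mul_right _ (hc i)) h1
      _ ≤ (lmax * γ) * (2 * τmin) + γ * (2 * τmin) :=
          Nat.add_le_add_left (Nat.le_mul_of_pos_left _ hpos) _
      _ = (2 * lmax + 2) * (γ * τmin) := by ring
      _ ≤ _ := Nat.mul_le_mul_left _ hopt
end

section
/- Suppose there are n transactions and s ≥ 1 resources, every transaction writes at least m ≥ 1 resources (|W i| ≥ m for all i), and every duration satisfies τ_min ≤ τ i ≤ 2·τ_min for some τ_min ≥ 1. Then there exists a valid schedule σ such that for every valid schedule σ′, the makespan of σ is at most (2·s/m) times the makespan of σ′. -/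
/-- Per-subgroup competitive bound (Lemma 2): if each of the `n` transactions writes at
least `m ≥ 1` of the `s ≥ 1` resources and durations lie in `[τmin, 2·τmin]`, there is a
valid schedule whose makespan is within a factor `2·s/m` of every valid schedule. -/
theorem stmt6 {ι : Type*} [Fintype ι] {s n m τmin : ℕ}
    (hs : 1 ≤ s) (hm : 1 ≤ m) (hτmin : 1 ≤ τmin)
    (hn : Fintype.card ι = n)
    (W Rd : ι → Finset (Fin s)) (τ : ι → ℕ)
    (hW : ∀ i, m ≤ (W i).card)
    (hτ : ∀ i, τmin ≤ τ i ∧ τ i ≤ 2 * τmin) :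
    ∃ σ : ι → ℕ, ValidSchedule W Rd τ σ ∧
      ∀ σ' : ι → ℕ, ValidSchedule W Rd τ σ' →
        (makespan τ σ : ℝ) ≤ (2 * s / m : ℝ) * makespan τ σ' := by
  classical
  let e := Fintype.equivFin ι
  let σ : ι → ℕ := fun i => ∑ j ∈ Finset.univ.filter (fun j => e j < e i), τ j
  have hstep : ∀ i j, e i < e j → σ i + τ i ≤ σ j := by
    intro i j hij
    have h1 : i ∉ Finset.univ.filter (fun k => e k < e i) := by simp
    have h2 : σ i + τ i = ∑ k ∈ insert i (Finset.univ.filter (fun k => e k < e i)), τ k := by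
      rw [Finset.sum_insert h1, add_comm]
    rw [h2]
    apply Finset.sum_le_sum_of_subset
    intro k hk
    simp only [Finset.mem_insert, Finset.mem_filter, Finset.mem_univ, true_and] at hk ⊢
    rcases hk with rfl | hk
    · exact hij
    · exact hk.trans hij
  have hmk : makespan τ σ ≤ ∑ i, τ i := by
    apply Finset.sup_le
    intro i _
    have h1 : i ∉ Finset.univ.filter (fun k => e k < e i) := by simp
    have h2 : σ i + τ i = ∑ k ∈ insert i (Finset.univ.filter (fun k => e k < e i)), τ k := by
      rw [Finset.sum_insert h1, add_comm]
    rw [h2]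
    exact Finset.sum_le_sum_of_subset (Finset.subset_univ _)
  refine ⟨σ, ?_, ?_⟩
  · intro i j hc
    have hne : e i ≠ e j := fun h => hc.1 (e.injective h)
    rw [Finset.disjoint_left]
    intro t ht ht'
    rw [Finset.mem_Ico] at ht ht'
    rcases lt_or_gt_of_ne hne with h | h
    · have := hstep i j h
      omega
    · have := hstep j i h
      omega
  · intro σ' hv
    have hr : ∀ r : Fin s, ∑ i ∈ Finset.univ.filter (fun i => r ∈ W i), τ i ≤ makespan τ σ' := by
      intro r
      have hd : ∀ i ∈ Finset.univ.filter (fun i => r ∈ W i),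
          ∀ j ∈ Finset.univ.filter (fun i => r ∈ W i), i ≠ j →
          Disjoint (Finset.Ico (σ' i) (σ' i + τ i)) (Finset.Ico (σ' j) (σ' j + τ j)) := by
        intro i hi j hj hij
        simp only [Finset.mem_filter, Finset.mem_univ, true_and] at hi hj
        exact hv i j ⟨hij, Or.inl ⟨r, by simp [hi, hj]⟩⟩
      have hc := Finset.card_biUnion hd
      simp only [Nat.card_Ico, Nat.add_sub_cancel_left] at hc
      rw [← hc]
      refine (Finset.card_le_card (t := Finset.range (makespan τ σ')) ?_).trans_eq
        (Finset.card_range _)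
      intro t ht
      simp only [Finset.mem_biUnion, Finset.mem_Ico] at ht
      obtain ⟨i, _, _, h⟩ := ht
      have : σ' i + τ i ≤ makespan τ σ' :=
        Finset.le_sup (f := fun i => σ' i + τ i) (Finset.mem_univ i)
      exact Finset.mem_range.2 (h.trans_le this)
    have hsum : m * ∑ i, τ i ≤ s * makespan τ σ' := by
      calc m * ∑ i, τ i = ∑ i, m * τ i := Finset.mul_sum _ _ _
        _ ≤ ∑ i, (W i).card * τ i :=
          Finset.sum_le_sum fun i _ => Nat.mul_le_mul_right _ (hW i)
        _ = ∑ i, ∑ r : Fin s, if r ∈ W i then τ i else 0 := by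
          refine Finset.sum_congr rfl fun i _ => ?_
          simp
        _ = ∑ r : Fin s, ∑ i, if r ∈ W i then τ i else 0 := Finset.sum_comm
        _ ≤ ∑ r : Fin s, makespan τ σ' := by
          refine Finset.sum_le_sum fun r _ => ?_
          rw [← Finset.sum_filter]
          exact hr r
        _ = s * makespan τ σ' := by simp
    have hfin : m * makespan τ σ ≤ s * makespan τ σ' :=
      (Nat.mul_le_mul_left _ hmk).trans hsum
    have hR : (m : ℝ) * makespan τ σ ≤ s * makespan τ σ' := by exact_mod_cast hfin
    have hm0 : (0 : ℝ) < m := by exact_mod_cast hm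
    rw [div_mul_eq_mul_div, le_div_iff₀ hm0]
    have : (0 : ℝ) ≤ s * makespan τ σ' := by positivity
    linarith
end

section
/- Let G be a simple graph on a finite vertex type V, and consider the transaction scheduling instance in which resources are the edges of G, the transaction of vertex v writes exactly the edges incident to v, reads nothing, and has duration 1. Then for every k ≥ 1: G has a proper vertex coloring with k colors if and only if this instance admits a valid schedule with makespan at most k. Consequently, the minimum makespan over all valid schedules equals the chromatic number of G. -/
theorem aux_conflict {V : Type*} (G : SimpleGraph V) (u v : V) (h : u ≠ v) :
    ({e ∈ G.edgeSet | u ∈ e} ∩ {e ∈ G.edgeSet | v ∈ e}).Nonempty ↔ G.Adj u v := by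
  constructor
  · rintro ⟨e, ⟨he, hu⟩, ⟨_, hv⟩⟩
    have := (Sym2.mem_and_mem_iff h).1 ⟨hu, hv⟩
    subst this
    exact he
  · intro ha
    exact ⟨s(u, v), ⟨ha, Sym2.mem_mk_left u v⟩, ⟨ha, Sym2.mem_mk_right u v⟩⟩

theorem aux_iff {V : Type*} [Fintype V] (G : SimpleGraph V) (k : ℕ) :
    (G.Colorable k ↔
        ∃ σ : V → ℕ,
          (∀ u v : V, u ≠ v →
            ({e ∈ G.edgeSet | u ∈ e} ∩ {e ∈ G.edgeSet | v ∈ e}).Nonempty → σ u ≠ σ v) ∧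
          Finset.univ.sup (fun v => σ v + 1) ≤ k) := by
  constructor
  · rintro ⟨C⟩
    refine ⟨fun v => (C v : ℕ), ?_, ?_⟩
    · intro u v huv hne heq
      exact C.valid ((aux_conflict G u v huv).1 hne) (Fin.ext heq)
    · exact Finset.sup_le fun v _ => (C v).isLt
  · rintro ⟨σ, hσ, hk⟩
    have hlt : ∀ v, σ v < k := fun v =>
      (Finset.le_sup (f := fun v => σ v + 1) (Finset.mem_univ v)).trans hk
    refine ⟨SimpleGraph.Coloring.mk (fun v => (⟨σ v, hlt v⟩ : Fin k)) ?_⟩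
    intro u v ha heq
    exact hσ u v ha.ne ((aux_conflict G u v ha.ne).2 ha) (Fin.mk.inj_iff.1 heq)

/-- Reduction of Vertex Coloring to Transaction Scheduling: with resources the edges of
`G`, the transaction of vertex `v` writing exactly the edges incident to `v`, reading
nothing, and having duration `1`, a schedule `σ : V → ℕ` is valid iff distinct vertices
whose incident-edge sets intersect get different start times, and its makespan is
`sup_v (σ v + 1)`.  Then for every `k ≥ 1`, `G` is `k`-colorable iff there is a valid
schedule of makespan at most `k`; consequently, the minimum makespan over valid schedules
equals the chromatic number of `G`. -/
theorem stmt16 {V : Type*} [Fintype V] (G : SimpleGraph V) :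
    (∀ k : ℕ, 1 ≤ k →
      (G.Colorable k ↔
        ∃ σ : V → ℕ,
          (∀ u v : V, u ≠ v →
            ({e ∈ G.edgeSet | u ∈ e} ∩ {e ∈ G.edgeSet | v ∈ e}).Nonempty → σ u ≠ σ v) ∧
          Finset.univ.sup (fun v => σ v + 1) ≤ k)) ∧
    ((sInf {m : ℕ | ∃ σ : V → ℕ,
        (∀ u v : V, u ≠ v →
          ({e ∈ G.edgeSet | u ∈ e} ∩ {e ∈ G.edgeSet | v ∈ e}).Nonempty → σ u ≠ σ v) ∧
        Finset.univ.sup (fun v => σ v + 1) = m} : ℕ) : ℕ∞) = G.chromaticNumber := by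
  refine ⟨fun k _ => aux_iff G k, ?_⟩
  apply le_antisymm
  · obtain ⟨n, hn⟩ := ENat.ne_top_iff_exists.1
      (SimpleGraph.chromaticNumber_ne_top_iff_exists.2 ⟨_, G.colorable_of_fintype⟩)
    have hc : G.Colorable n := SimpleGraph.chromaticNumber_le_iff_colorable.1 hn.symm.le
    obtain ⟨σ, hσ, hk⟩ := (aux_iff G n).1 hc
    rw [← hn]
    refine Nat.cast_le.2 (le_trans (Nat.sInf_le ?_) hk)
    exact ⟨σ, hσ, rfl⟩
  · apply SimpleGraph.chromaticNumber_le_iff_colorable.2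
    rw [aux_iff]
    obtain ⟨σ, hσ, hk⟩ := (aux_iff G _).1 G.colorable_of_fintype
    obtain ⟨τ, hτ, he⟩ := Nat.sInf_mem (s := {m : ℕ | ∃ σ : V → ℕ,
        (∀ u v : V, u ≠ v →
          ({e ∈ G.edgeSet | u ∈ e} ∩ {e ∈ G.edgeSet | v ∈ e}).Nonempty → σ u ≠ σ v) ∧
        Finset.univ.sup (fun v => σ v + 1) = m}) ⟨_, σ, hσ, rfl⟩
    exact ⟨τ, hτ, he.le⟩
end
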